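/- arXiv:2109.04099 — 2 statements merged into one kernel-verified Lean document; each statement's English description precedes it below -/
import Mathlib

section
/- Let G be a connected subdivision of an odd graph, let v be a degree-2 vertex of G that is not a cut-vertex, and let e be an edge incident to v. Then G admits an odd edge-coloring with colors {1,2,3,4} where the color class of 4 is contained in {e}. In particular χ'_o(G) ≤ 4. -/
open SimpleGraph Finset

variable {V : Type*} [Fintype V] [DecidableEq V]

/-- Number of edges incident to `v` receiving color `i` under the edge-coloring `f`. -/
def colorCount (G : SimpleGraph V) [DecidableRel G.Adj] {k : ℕ}
    (f : Sym2 V → Fin k) (v : V) (i : Fin k) : ℕ :=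
  ((G.incidenceFinset v).filter (fun e => f e = i)).card

/-- The edge-coloring `f` is odd at the vertex `v`: every color appearing at `v`
appears an odd number of times at `v`. -/
def OddAt (G : SimpleGraph V) [DecidableRel G.Adj] {k : ℕ}
    (f : Sym2 V → Fin k) (v : V) : Prop :=
  ∀ i : Fin k, colorCount G f v i = 0 ∨ Odd (colorCount G f v i)

/-- An odd edge-coloring: odd at every vertex. -/
def IsOddColoring (G : SimpleGraph V) [DecidableRel G.Adj] {k : ℕ}
    (f : Sym2 V → Fin k) : Prop :=
  ∀ v : V, OddAt G f v

/-- The odd chromatic index: least `k` admitting an odd `k`-edge-coloring. -/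
noncomputable def oddChromIndex (G : SimpleGraph V) [DecidableRel G.Adj] : ℕ :=
  sInf {k | ∃ f : Sym2 V → Fin k, IsOddColoring G f}

/-!
On a forest, any family of local edge-colorings, one around each vertex, can be glued to a single
coloring after permuting the colors at each vertex, because no cycle obstructs the choice of the
permutations. Around a single vertex two colors suffice for oddness (on even degree, one edge gets
a color of its own), so a forest has an odd `2`-edge-coloring.

Fix a vertex `r` of a connected graph. Solving a linear system over `ZMod 2` on a spanning tree
produces a forest whose complement has odd degree at every vertex except possibly `r`; coloring the
forest with two colors and its complement with a third is odd away from `r`. Apply this to `G - e`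
with `r = v`: since `v` is a leaf of `G - e`, oddness at `v` is automatic, and `e` takes the fourth
color.
-/

section GraphTheory

variable {α : Type*} {F G : SimpleGraph α}

theorem exists_perm_apply_eq_of_isAcyclic [Finite α] {C : Type*} (hF : F.IsAcyclic)
    (φ : α → Sym2 α → C) :
    ∃ σ : α → Equiv.Perm C, ∀ e ∈ F.edgeSet, ∃ c, ∀ x ∈ e, σ x (φ x e) = c := by
  classical
  induction F using WellFoundedLT.induction with
  | ind F ih =>
    obtain rfl | hne := eq_or_ne F ⊥
    · exact ⟨1, by simp⟩
    obtain ⟨a, b, hab⟩ := ne_bot_iff_exists_adj.mp hne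
    set F' := F.deleteEdges {s(a, b)} with hF'
    have hbridge : ¬ F'.Reachable a b := isAcyclic_iff_forall_adj_isBridge.mp hF hab
    have hlt : F' < F :=
      lt_of_le_of_ne (deleteEdges_le _) fun h => hbridge (h ▸ hab.reachable)
    obtain ⟨σ, hσ⟩ := ih F' hlt (hF.anti hlt.le)
    -- Recoloring the whole side of `a` by one permutation repairs the bridge `s(a, b)` and
    -- preserves the agreement on every other edge.
    let τ := Equiv.swap (σ a (φ a s(a, b))) (σ b (φ b s(a, b)))
    refine ⟨fun x => if F'.Reachable a x then τ * σ x else σ x, fun e he => ?_⟩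
    obtain rfl | hne := eq_or_ne e s(a, b)
    · refine ⟨σ b (φ b s(a, b)), fun x hx => ?_⟩
      obtain rfl | rfl := Sym2.mem_iff.mp hx
      · simp [τ]
      · simp [hbridge]
    · have he' : e ∈ F'.edgeSet := by simp [hF', edgeSet_deleteEdges, he, hne]
      obtain ⟨c, hc⟩ := hσ e he'
      induction e with
      | _ x y =>
        refine ⟨if F'.Reachable a x then τ c else c, fun z hz => ?_⟩
        have hside : F'.Reachable a z ↔ F'.Reachable a x := by
          have hxy : F'.Reachable x y := Adj.reachable he'
          obtain rfl | rfl := Sym2.mem_iff.mp hz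
          exacts [Iff.rfl, ⟨fun h => h.trans hxy.symm, fun h => h.trans hxy⟩]
        simp only [hside, ← hc z hz]
        split_ifs <;> rfl

theorem exists_edgeColoring_eq_perm_apply_of_isAcyclic [Finite α] {C : Type*} (hF : F.IsAcyclic)
    (φ : α → Sym2 α → C) :
    ∃ (f : Sym2 α → C) (σ : α → Equiv.Perm C), ∀ x, ∀ e ∈ F.incidenceSet x, f e = σ x (φ x e) := by
  obtain ⟨σ, hσ⟩ := exists_perm_apply_eq_of_isAcyclic hF φ
  refine ⟨fun e => σ e.out.1 (φ e.out.1 e), σ, fun x e he => ?_⟩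
  obtain ⟨c, hc⟩ := hσ e he.1
  exact (hc _ e.out_fst_mem).trans (hc x he.2).symm

theorem incMatrix_col_of_adj {R : Type*} [NonAssocSemiring R] [DecidableEq α] [DecidableRel G.Adj]
    {a b : α} (hab : G.Adj a b) :
    (G.incMatrix R).col s(a, b) = Pi.single a 1 + Pi.single b 1 := by
  ext x
  obtain rfl | hxa := eq_or_ne x a
  · simp [incMatrix_apply', hab, hab.ne]
  · obtain rfl | hxb := eq_or_ne x b
    · simp [incMatrix_apply', mk'_mem_incidenceSet_iff, hab, hxa]
    · simp [incMatrix_apply', mk'_mem_incidenceSet_iff, hxa, hxb]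

section CharTwo

variable {R : Type*} [CommRing R] [CharP R 2] [Fintype α] [DecidableEq α] [DecidableRel G.Adj]

theorem single_sub_single_mem_range_incMatrix {a b : α} (hab : G.Reachable a b) :
    (Pi.single a 1 - Pi.single b 1 : α → R) ∈ LinearMap.range (G.incMatrix R).mulVecLin := by
  obtain ⟨p⟩ := hab
  induction p with
  | nil => simp only [sub_self, Submodule.zero_mem]
  | @cons a c b hac _ ih =>
    have hstep : (Pi.single a 1 - Pi.single c 1 : α → R) ∈
        LinearMap.range (G.incMatrix R).mulVecLin := by
      refine ⟨Pi.single s(a, c) 1, ?_⟩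
      rw [Matrix.mulVecLin_apply, Matrix.mulVec_single_one, incMatrix_col_of_adj hac]
      exact funext fun x => (CharTwo.sub_eq_add _ _).symm
    rw [← sub_add_sub_cancel]
    exact add_mem hstep ih

theorem exists_incMatrix_mulVec_apply_eq_of_ne (hG : G.Preconnected) (τ : α → R) (r : α) :
    ∃ h : Sym2 α → R, ∀ x ≠ r, (G.incMatrix R).mulVec h x = τ x := by
  have hmem : ∑ y, τ y • (Pi.single y 1 - Pi.single r 1 : α → R) ∈
      LinearMap.range (G.incMatrix R).mulVecLin :=
    sum_mem fun y _ => Submodule.smul_mem _ _ <|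
      single_sub_single_mem_range_incMatrix (hG y r)
  obtain ⟨h, hh⟩ := hmem
  rw [Matrix.mulVecLin_apply] at hh
  refine ⟨h, fun x hx => ?_⟩
  simp [hh, Finset.sum_apply, hx, Pi.single_apply]

end CharTwo

theorem natCast_degree_deleteEdges_eq_incMatrix_mulVec [Fintype α] [DecidableEq α]
    [DecidableRel G.Adj] (h : Sym2 α → ZMod 2) [DecidableRel (G.deleteEdges {e | h e = 0}).Adj]
    (x : α) :
    ((G.deleteEdges {e | h e = 0}).degree x : ZMod 2) = (G.incMatrix (ZMod 2)).mulVec h x := by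
  rw [← sum_incMatrix_apply]
  refine Finset.sum_congr rfl fun e _ => ?_
  have hmem : e ∈ (G.deleteEdges {e | h e = 0}).incidenceSet x ↔
      e ∈ G.incidenceSet x ∧ h e ≠ 0 := by
    simp only [incidenceSet, Set.mem_sep_iff, edgeSet_deleteEdges, Set.mem_sdiff]
    exact and_right_comm
  have hcases : ∀ p : ZMod 2, p = 0 ∨ p = 1 := by decide
  obtain he | he := hcases (h e) <;> simp [incMatrix_apply', hmem, he]

theorem exists_isAcyclic_odd_degree_iff_mem_of_ne [Fintype α] (hG : G.Connected) (T : Set α)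
    (r : α) :
    ∃ (F : SimpleGraph α) (_ : DecidableRel F.Adj), F ≤ G ∧ F.IsAcyclic ∧
      ∀ x ≠ r, Odd (F.degree x) ↔ x ∈ T := by
  classical
  obtain ⟨S, hSG, hS⟩ := hG.exists_isTree_le
  obtain ⟨h, hh⟩ := exists_incMatrix_mulVec_apply_eq_of_ne hS.connected.preconnected
    (T.indicator (1 : α → ZMod 2)) r
  refine ⟨S.deleteEdges {e | h e = 0}, inferInstance, (deleteEdges_le _).trans hSG,
    hS.isAcyclic.anti (deleteEdges_le _), fun x hx => ?_⟩
  rw [← ZMod.natCast_eq_one_iff_odd, natCast_degree_deleteEdges_eq_incMatrix_mulVec, hh x hx]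
  simp [Set.indicator_apply]

theorem connected_deleteEdges_of_connected_induce_compl {v : α} {e : Sym2 α}
    [Fintype (G.neighborSet v)] (hG : (G.induce {v}ᶜ).Connected) (he : e ∈ G.incidenceSet v)
    (hv : 2 ≤ G.degree v) : (G.deleteEdges {e}).Connected := by
  classical
  obtain ⟨u, rfl⟩ := Sym2.mem_iff_exists.mp he.2
  obtain ⟨w, hw, hwu⟩ := exists_mem_ne hv u
  rw [mem_neighborFinset] at hw
  have hvw : (G.deleteEdges {s(v, u)}).Adj v w := by
    simpa [hw] using ⟨hwu, fun _ => hw.ne'⟩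
  have hrest : ((G.deleteEdges {s(v, u)}).induce {v}ᶜ).Connected := by
    refine hG.mono fun a b hab => deleteEdges_adj.mpr ⟨hab, fun h => ?_⟩
    have hmem : v ∈ s(a.1, b.1) := h ▸ Sym2.mem_mk_left v u
    obtain h | h := Sym2.mem_iff.mp hmem
    exacts [a.2 h.symm, b.2 h.symm]
  have hunion := connected_induce_union Preconnected.of_subsingleton hrest.preconnected
    (Set.mem_singleton v) hvw.ne' hvw
  rw [Set.union_compl_self] at hunion
  exact (induceUnivIso _).connected_iff.mp hunion

theorem degree_sdiff_add_degree [Fintype α] [DecidableRel G.Adj] [DecidableRel F.Adj]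
    [DecidableRel (G \ F).Adj] (hFG : F ≤ G) (x : α) :
    (G \ F).degree x + F.degree x = G.degree x := by
  classical
  simp only [← card_neighborFinset_eq_degree, neighborFinset_sdiff]
  refine card_sdiff_add_card_eq_card fun y => ?_
  simpa only [mem_neighborFinset] using @hFG x y

theorem degree_sdiff_deleteEdges_singleton [Fintype α] [DecidableEq α] [DecidableRel G.Adj]
    {e : Sym2 α} [DecidableRel (G \ G.deleteEdges {e}).Adj] (x : α) :
    (G \ G.deleteEdges {e}).degree x = if e ∈ G.incidenceSet x then 1 else 0 := by
  have hinc : (G \ G.deleteEdges {e}).incidenceFinset x =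
      (G.incidenceFinset x).filter (· = e) := by
    ext e'
    simp only [mem_incidenceFinset, incidenceSet, Finset.mem_filter, Set.mem_ofPred_eq,
      edgeSet_sdiff, edgeSet_deleteEdges, Set.mem_sdiff, Set.mem_singleton_iff]
    tauto
  rw [← card_incidenceFinset_eq_degree, hinc, Finset.filter_eq']
  simp only [mem_incidenceFinset]
  split_ifs <;> rfl

end GraphTheory

section ExtendByLast

variable {α : Type*} {k : ℕ}

/-- Extension of a `k`-edge-coloring of the graph `F` to a `(k + 1)`-edge-coloring of any larger
graph: all edges outside `F` receive the new color `Fin.last k`. -/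
def extendByLast (F : SimpleGraph α) [DecidableRel F.Adj] (f : Sym2 α → Fin k) (e : Sym2 α) :
    Fin (k + 1) :=
  if e ∈ F.edgeSet then (f e).castSucc else Fin.last k

variable {F : SimpleGraph α} [DecidableRel F.Adj] {f : Sym2 α → Fin k} {e : Sym2 α}

theorem extendByLast_eq_castSucc_iff {i : Fin k} :
    extendByLast F f e = i.castSucc ↔ e ∈ F.edgeSet ∧ f e = i := by
  unfold extendByLast
  split_ifs with he <;> simp [he, i.castSucc_ne_last.symm]

theorem extendByLast_eq_last_iff : extendByLast F f e = Fin.last k ↔ e ∉ F.edgeSet := by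
  unfold extendByLast
  split_ifs with he <;> simp [he, (f e).castSucc_ne_last]

end ExtendByLast

section OddColoring

variable {G F : SimpleGraph V} [DecidableRel G.Adj] [DecidableRel F.Adj] {k : ℕ}
  {f g : Sym2 V → Fin k} {x : V}

theorem colorCount_perm_comp (σ : Equiv.Perm (Fin k)) (i : Fin k) :
    colorCount G (σ ∘ f) x (σ i) = colorCount G f x i := by
  simp [colorCount]

theorem OddAt.perm_comp (hf : OddAt G f x) (σ : Equiv.Perm (Fin k)) : OddAt G (σ ∘ f) x :=
  σ.surjective.forall.mpr fun i => by simpa only [colorCount_perm_comp] using hf i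

theorem OddAt.congr (hf : OddAt G f x) (hfg : ∀ e ∈ G.incidenceSet x, f e = g e) :
    OddAt G g x := by
  intro i
  have hcount : colorCount G g x i = colorCount G f x i :=
    congrArg card <| Finset.filter_congr fun e he => by
      rw [hfg e ((G.mem_incidenceFinset x e).mp he)]
  simpa only [hcount] using hf i

theorem oddAt_of_degree_le_one (f : Sym2 V → Fin k) (hx : G.degree x ≤ 1) : OddAt G f x := by
  intro i
  have hle : colorCount G f x i ≤ 1 :=
    (card_filter_le _ _).trans ((G.card_incidenceFinset_eq_degree x).trans_le hx)
  obtain h | h := Nat.le_one_iff_eq_zero_or_eq_one.mp hle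
  exacts [.inl h, .inr (h ▸ odd_one)]

variable (G) in
theorem exists_oddAt_fin_two (x : V) : ∃ f : Sym2 V → Fin 2, OddAt G f x := by
  obtain hodd | heven := (G.degree x).even_or_odd.symm
  · refine ⟨fun _ => 0, Fin.forall_fin_two.mpr ⟨.inr ?_, .inl ?_⟩⟩
    · simpa [colorCount] using hodd
    · simp [colorCount]
  obtain hempty | ⟨e, he⟩ := (G.incidenceFinset x).eq_empty_or_nonempty
  · exact ⟨fun _ => 0, by simp [OddAt, colorCount, hempty]⟩
  let f : Sym2 V → Fin 2 := fun e' => if e' = e then 1 else 0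
  have hpos : 0 < G.degree x :=
    (G.card_incidenceFinset_eq_degree x) ▸ card_pos.mpr ⟨e, he⟩
  have hzero : colorCount G f x 0 = G.degree x - 1 := by
    simp [f, colorCount, Finset.filter_ne', card_erase_of_mem he]
  have hone : colorCount G f x 1 = 1 := by
    simp [f, colorCount, Finset.filter_eq', (G.mem_incidenceFinset x e).mp he]
  refine ⟨f, Fin.forall_fin_two.mpr ⟨.inr ?_, .inr ?_⟩⟩
  · rw [hzero]
    exact Nat.Even.sub_odd hpos heven odd_one
  · rw [hone]
    exact odd_one

theorem colorCount_extendByLast_castSucc (hFG : F ≤ G) (i : Fin k) :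
    colorCount G (extendByLast F f) x i.castSucc = colorCount F f x i := by
  refine congrArg card (Finset.ext fun e => ?_)
  have hmem : e ∈ F.edgeSet → e ∈ G.edgeSet := fun he => edgeSet_mono hFG he
  simp only [Finset.mem_filter, mem_incidenceFinset, incidenceSet, Set.mem_sep_iff,
    extendByLast_eq_castSucc_iff]
  tauto

theorem colorCount_extendByLast_last :
    colorCount G (extendByLast F f) x (Fin.last k) = (G \ F).degree x := by
  rw [← card_incidenceFinset_eq_degree]
  refine congrArg card (Finset.ext fun e => ?_)
  simp only [Finset.mem_filter, mem_incidenceFinset, incidenceSet, Set.mem_sep_iff,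
    extendByLast_eq_last_iff, edgeSet_sdiff, Set.mem_sdiff]
  exact and_right_comm

theorem OddAt.extendByLast (hf : OddAt F f x) (hFG : F ≤ G)
    (hx : (G \ F).degree x = 0 ∨ Odd ((G \ F).degree x)) : OddAt G (extendByLast F f) x := by
  refine Fin.lastCases ?_ fun i => ?_
  · rwa [colorCount_extendByLast_last]
  · simpa only [colorCount_extendByLast_castSucc hFG] using hf i

theorem exists_isOddColoring_fin_two_of_isAcyclic (hG : G.IsAcyclic) :
    ∃ f : Sym2 V → Fin 2, IsOddColoring G f := by
  choose φ hφ using exists_oddAt_fin_two G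
  obtain ⟨f, σ, hf⟩ := exists_edgeColoring_eq_perm_apply_of_isAcyclic hG φ
  exact ⟨f, fun x => ((hφ x).perm_comp (σ x)).congr fun e he => (hf x e he).symm⟩

theorem exists_oddAt_fin_three_of_ne (hG : G.Connected) (r : V) :
    ∃ f : Sym2 V → Fin 3, ∀ x ≠ r, OddAt G f x := by
  obtain ⟨F, _, hFG, hF, hdeg⟩ :=
    exists_isAcyclic_odd_degree_iff_mem_of_ne hG {x | Even (G.degree x)} r
  obtain ⟨f, hf⟩ := exists_isOddColoring_fin_two_of_isAcyclic hF
  refine ⟨extendByLast F f, fun x hx => (hf x).extendByLast hFG (.inr ?_)⟩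
  have hF_odd : Odd (F.degree x) ↔ Even (G.degree x) := hdeg x hx
  rw [← degree_sdiff_add_degree hFG] at hF_odd
  grind

end OddColoring

theorem odd_four_coloring_with_singleton_class_general (G : SimpleGraph V) [DecidableRel G.Adj]
    (v : V) (hv : G.degree v = 2) (hint : (G.induce ({v}ᶜ : Set V)).Connected)
    (e : Sym2 V) (he : e ∈ G.incidenceSet v) :
    ∃ f : Sym2 V → Fin 4, IsOddColoring G f ∧ ∀ e' ∈ G.edgeSet, f e' = 3 ↔ e' = e := by
  have hconn : (G.deleteEdges {e}).Connected :=
    connected_deleteEdges_of_connected_induce_compl hint he hv.ge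
  obtain ⟨f, hf⟩ := exists_oddAt_fin_three_of_ne hconn v
  have hleaf : (G.deleteEdges {e}).degree v ≤ 1 := by
    have hsum := degree_sdiff_add_degree (G.deleteEdges_le {e}) v
    rw [degree_sdiff_deleteEdges_singleton, if_pos he] at hsum
    lia
  have hodd : IsOddColoring (G.deleteEdges {e}) f := fun x => by
    obtain rfl | hx := eq_or_ne x v
    exacts [oddAt_of_degree_le_one f hleaf, hf x hx]
  refine ⟨extendByLast (G.deleteEdges {e}) f,
    fun x => (hodd x).extendByLast (deleteEdges_le _) ?_, fun e' he' => ?_⟩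
  · rw [degree_sdiff_deleteEdges_singleton]
    split_ifs
    exacts [.inr odd_one, .inl rfl]
  · exact extendByLast_eq_last_iff.trans (by simp [edgeSet_deleteEdges, he'])

theorem odd_four_coloring_with_singleton_class (G : SimpleGraph V) [DecidableRel G.Adj]
    (hG : G.Connected) (hsub : ∀ v : V, Odd (G.degree v) ∨ G.degree v = 2)
    (v : V) (hv : G.degree v = 2) (hint : (G.induce ({v}ᶜ : Set V)).Connected)
    (e : Sym2 V) (he : e ∈ G.incidenceSet v) :
    ∃ f : Sym2 V → Fin 4, IsOddColoring G f ∧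
      ∀ e' ∈ G.edgeSet, f e' = 3 → e' = e := by
  obtain ⟨f, hf, hlast⟩ := odd_four_coloring_with_singleton_class_general G v hv hint e he
  exact ⟨f, hf, fun e' he' => (hlast e' he').mp⟩
end

section
/- Let G be a subdivision of an odd graph. Then χ'_o(G) ≤ 2 if and only if for every cycle C of G, the number of vertices on C having degree 2 in G is even. -/
open SimpleGraph Finset

variable {V : Type*} [Fintype V] [DecidableEq V]

/-!
Identify the two colors with `0` and `1` in `ZMod 2`. A 2-coloring `f` is odd at a vertex `v` of odd
degree iff all edges at `v` have the same color, and odd at a vertex of degree 2 iff its two edges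
have different colors; so `f` is odd iff `f e + f e' = δ v` for any two distinct edges `e`, `e'` at
`v`, where `δ` is the indicator of the vertices of degree 2. Summing these equations around a cycle
`C` counts every edge of `C` twice, hence `∑ v ∈ C, δ v = 0`.

Conversely, the equations are solved at every vertex separately by labels `s v u` on half-edges.
Adding a constant `y v` to all labels at `v` preserves the equations, and the two halves of an edge
`ab` then agree iff `y a + y b = s a b + s b a`. Such a potential `y` exists as soon as the
right-hand side sums to zero along every cycle, and along `C` it sums to `∑ v ∈ C, δ v`.
-/

section WalkSum

variable {W : Type*} {H : SimpleGraph W} {u v w : W}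

section AddMonoid

variable {M : Type*} [AddMonoid M] (t : W → W → M)

/-- The sum of the weights `t a b` over the steps `a → b` of a walk. In the language of gain
graphs this is the gain of the walk. -/
def walkSum (p : H.Walk u v) : M :=
  (p.darts.map fun d => t d.fst d.snd).sum

@[simp]
theorem walkSum_nil : walkSum t (Walk.nil : H.Walk u u) = 0 := rfl

@[simp]
theorem walkSum_cons (h : H.Adj u v) (p : H.Walk v w) :
    walkSum t (Walk.cons h p) = t u v + walkSum t p := by
  simp [walkSum]

@[simp]
theorem walkSum_copy {u' v' : W} (p : H.Walk u v) (hu : u = u') (hv : v = v') :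
    walkSum t (p.copy hu hv) = walkSum t p := by
  simp [walkSum]

@[simp]
theorem walkSum_append (p : H.Walk u v) (q : H.Walk v w) :
    walkSum t (p.append q) = walkSum t p + walkSum t q := by
  simp [walkSum]

end AddMonoid

section AddGroup

variable {A : Type*} [AddGroup A] {t : W → W → A}

theorem walkSum_reverse (ht : ∀ a b, H.Adj a b → t b a = -t a b) (p : H.Walk u v) :
    walkSum t p.reverse = -walkSum t p := by
  induction p with
  | nil => simp
  | cons h p ih => simp [Walk.reverse_cons, ih, ht _ _ h]

theorem walkSum_cons_eq_zero_of_isPath (ht : ∀ a b, H.Adj a b → t b a = -t a b)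
    (hcycle : ∀ (x : W) (C : H.Walk x x), C.IsCycle → walkSum t C = 0)
    (h : H.Adj u v) {p : H.Walk v u} (hp : p.IsPath) :
    walkSum t (Walk.cons h p) = 0 := by
  by_cases hmem : s(u, v) ∈ p.edges
  · cases p with
    | nil => exact absurd h (H.loopless.irrefl _)
    | cons h' q =>
      obtain ⟨hq, hv⟩ := (Walk.cons_isPath_iff h' q).1 hp
      rw [Walk.edges_cons, List.mem_cons] at hmem
      rcases hmem with hback | hmem
      · obtain rfl : u = _ := Sym2.congr_right.1 (Sym2.eq_swap.trans hback)
        obtain rfl := (Walk.isPath_iff_nil.1 hq).eq_nil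
        simp [ht _ _ h]
      · exact absurd (q.snd_mem_support_of_mem_edges hmem) hv
  · exact hcycle u _ ((Walk.cons_isCycle_iff p h).2 ⟨hp, hmem⟩)

theorem walkSum_bypass [DecidableEq W] (ht : ∀ a b, H.Adj a b → t b a = -t a b)
    (hcycle : ∀ (x : W) (C : H.Walk x x), C.IsCycle → walkSum t C = 0) (p : H.Walk u v) :
    walkSum t p.bypass = walkSum t p := by
  induction p with
  | nil => rfl
  | @cons a b _ h p ih =>
    rw [walkSum_cons, ← ih, Walk.bypass]
    split_ifs with ha
    · have hclosed := walkSum_cons_eq_zero_of_isPath ht hcycle h (p.bypass_isPath.takeUntil ha)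
      calc walkSum t (p.bypass.dropUntil a ha)
          = walkSum t (Walk.cons h (p.bypass.takeUntil a ha)) +
              walkSum t (p.bypass.dropUntil a ha) := by rw [hclosed, zero_add]
        _ = walkSum t (Walk.cons h p.bypass) := by
          rw [← walkSum_append, Walk.cons_append, Walk.take_spec]
        _ = t a b + walkSum t p.bypass := walkSum_cons ..
    · exact walkSum_cons ..

theorem walkSum_eq_zero_of_closed (ht : ∀ a b, H.Adj a b → t b a = -t a b)
    (hcycle : ∀ (x : W) (C : H.Walk x x), C.IsCycle → walkSum t C = 0) (p : H.Walk u u) :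
    walkSum t p = 0 := by
  classical
  rw [← walkSum_bypass ht hcycle, (Walk.isPath_iff_nil.1 p.bypass_isPath).eq_nil,
    walkSum_nil]

theorem walkSum_eq_walkSum (ht : ∀ a b, H.Adj a b → t b a = -t a b)
    (hcycle : ∀ (x : W) (C : H.Walk x x), C.IsCycle → walkSum t C = 0) (p q : H.Walk u v) :
    walkSum t p = walkSum t q := by
  have hclosed := walkSum_eq_zero_of_closed ht hcycle (p.append q.reverse)
  rwa [walkSum_append, walkSum_reverse ht, add_neg_eq_zero] at hclosed

theorem exists_potential (ht : ∀ a b, H.Adj a b → t b a = -t a b)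
    (hcycle : ∀ (x : W) (C : H.Walk x x), C.IsCycle → walkSum t C = 0) :
    ∃ y : W → A, ∀ a b, H.Adj a b → y b = y a + t a b := by
  let root (a : W) : W := (H.connectedComponentMk a).out
  have hroot (a : W) : H.Reachable (root a) a :=
    ConnectedComponent.exact (H.connectedComponentMk a).out_eq
  let fromRoot (a : W) : H.Walk (root a) a := (hroot a).some
  refine ⟨fun a => walkSum t (fromRoot a), fun a b hab => ?_⟩
  have hcomp : root b = root a := by
    simp only [root, ConnectedComponent.sound hab.reachable]
  calc walkSum t (fromRoot b)
      = walkSum t ((fromRoot b).copy hcomp rfl) := (walkSum_copy ..).symm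
    _ = walkSum t ((fromRoot a).append (Walk.cons hab Walk.nil)) := walkSum_eq_walkSum ht hcycle _ _
    _ = walkSum t (fromRoot a) + t a b := by simp

end AddGroup

end WalkSum

section HalfEdges

variable {W M : Type*} {H : SimpleGraph W} {s : W → W → M} {δ : W → M}

/-- `s v u` labels the half-edge at `v` of the edge `vu`; any two distinct half-edges at `v` have
labels adding up to `δ v`. Only the values `s v u` with `v` and `u` adjacent matter. -/
def IsHalfEdgeLabeling [Add M] (H : SimpleGraph W) (s : W → W → M) (δ : W → M) : Prop :=
  ∀ ⦃v a b : W⦄, H.Adj v a → H.Adj v b → a ≠ b → s v a + s v b = δ v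

section AddCommMonoid

variable [AddCommMonoid M]

theorem IsHalfEdgeLabeling.walkSum_of_isTrail_cons (hs : IsHalfEdgeLabeling H s δ) {u v w : W}
    (h : H.Adj u v) (p : H.Walk v w) (hp : (Walk.cons h p).IsTrail) :
    s v u + walkSum (fun a b => s a b + s b a) p =
      (p.support.dropLast.map δ).sum + s w (Walk.cons h p).penultimate := by
  induction p generalizing u with
  | nil => simp
  | @cons v b w h' p ih =>
    have hub : u ≠ b := by
      rintro rfl
      simp [Sym2.eq_swap] at hp
    calc s v u + walkSum (fun a b => s a b + s b a) (Walk.cons h' p)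
        = (s v u + s v b) + (s b v + walkSum (fun a b => s a b + s b a) p) := by
          rw [walkSum_cons]; abel
      _ = δ v + ((p.support.dropLast.map δ).sum + s w (Walk.cons h' p).penultimate) := by
          rw [hs h.symm h' hub, ih h' hp.of_cons]
      _ = ((Walk.cons h' p).support.dropLast.map δ).sum +
            s w (Walk.cons h (Walk.cons h' p)).penultimate := by
          rw [Walk.support_cons, List.dropLast_cons_of_ne_nil p.support_ne_nil, List.map_cons,
            List.sum_cons, Walk.penultimate_cons_cons, add_assoc]

theorem IsHalfEdgeLabeling.walkSum_of_isCycle (hs : IsHalfEdgeLabeling H s δ) {x : W}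
    {C : H.Walk x x} (hC : C.IsCycle) :
    walkSum (fun a b => s a b + s b a) C = (C.support.tail.map δ).sum := by
  rw [(C.tail_support_perm_dropLast_support.map δ).sum_eq]
  cases C with
  | nil => exact absurd hC Walk.not_isCycle_nil
  | @cons _ b _ h p =>
    have hne : b ≠ (Walk.cons h p).penultimate := by
      simpa using hC.snd_ne_penultimate
    have hadj := (Walk.adj_penultimate hC.not_nil).symm
    calc walkSum (fun a b => s a b + s b a) (Walk.cons h p)
        = s x b + (s b x + walkSum (fun a b => s a b + s b a) p) := by
          rw [walkSum_cons, add_assoc]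
      _ = (s x b + s x (Walk.cons h p).penultimate) + (p.support.dropLast.map δ).sum := by
          rw [hs.walkSum_of_isTrail_cons h p hC.isTrail]; abel
      _ = ((Walk.cons h p).support.dropLast.map δ).sum := by
          rw [hs h hadj hne, Walk.support_cons, List.dropLast_cons_of_ne_nil p.support_ne_nil,
            List.map_cons, List.sum_cons]

end AddCommMonoid

section ZModTwo

variable [AddCommGroup M] [Module (ZMod 2) M]

theorem walkSum_symm_eq_zero (f : Sym2 W → M) {u v : W} (p : H.Walk u v) :
    walkSum (fun a b => f s(a, b) + f s(b, a)) p = 0 := by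
  induction p with
  | nil => rfl
  | cons _ _ ih => rw [walkSum_cons, ih, Sym2.eq_swap, ZModModule.add_self, add_zero]

theorem IsHalfEdgeLabeling.exists_edgeLabeling (hs : IsHalfEdgeLabeling H s δ)
    (hcycle : ∀ (x : W) (C : H.Walk x x), C.IsCycle → (C.support.tail.map δ).sum = 0) :
    ∃ f : Sym2 W → M, IsHalfEdgeLabeling H (fun v u => f s(v, u)) δ := by
  classical
  obtain ⟨y, hy⟩ := exists_potential (H := H) (t := fun a b => s a b + s b a)
    (fun a b _ => by rw [ZModModule.neg_eq_self, add_comm])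
    (fun x C hC => by rw [hs.walkSum_of_isCycle hC, hcycle x C hC])
  have hglue (a b : W) (hab : H.Adj a b) : y a + s a b = y b + s b a := by
    rw [hy a b hab, add_assoc, add_assoc, ZModModule.add_self, add_zero]
  let f : Sym2 W → M := Sym2.lift ⟨fun a b => if H.Adj a b then y a + s a b else 0, fun a b => by
    by_cases hab : H.Adj a b
    · simp only [if_pos hab, if_pos hab.symm, hglue a b hab]
    · simp only [if_neg hab, if_neg (mt H.adj_symm hab)]⟩
  have hf (v a : W) (hva : H.Adj v a) : f s(v, a) = y v + s v a := if_pos hva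
  refine ⟨f, fun v a b ha hb hab => ?_⟩
  calc f s(v, a) + f s(v, b)
      = (y v + y v) + (s v a + s v b) := by rw [hf v a ha, hf v b hb, add_add_add_comm]
    _ = δ v := by rw [ZModModule.add_self, zero_add, hs ha hb hab]

theorem IsHalfEdgeLabeling.exists_edgeLabeling_iff (hs : IsHalfEdgeLabeling H s δ) :
    (∃ f : Sym2 W → M, IsHalfEdgeLabeling H (fun v u => f s(v, u)) δ) ↔
      ∀ (x : W) (C : H.Walk x x), C.IsCycle → (C.support.tail.map δ).sum = 0 := by
  refine ⟨?_, hs.exists_edgeLabeling⟩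
  rintro ⟨f, hf⟩ x C hC
  rw [← hf.walkSum_of_isCycle hC, walkSum_symm_eq_zero]

end ZModTwo

/-- The indicator function of the vertices of degree 2. -/
def degreeTwo (H : SimpleGraph W) [H.LocallyFinite] (v : W) : ZMod 2 :=
  if H.degree v = 2 then 1 else 0

theorem exists_isHalfEdgeLabeling_degreeTwo (H : SimpleGraph W) [H.LocallyFinite] :
    ∃ s : W → W → ZMod 2, IsHalfEdgeLabeling H s (degreeTwo H) := by
  classical
  suffices hlocal : ∀ v, ∃ r : W → ZMod 2, ∀ a b, H.Adj v a → H.Adj v b → a ≠ b →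
      r a + r b = degreeTwo H v by
    choose s hs using hlocal
    exact ⟨s, fun v => hs v⟩
  intro v
  by_cases hv : H.degree v = 2
  · obtain ⟨c, d, hcd, hneighbor⟩ := card_eq_two.1 hv
    have hmem (a : W) (ha : H.Adj v a) : a = c ∨ a = d := by
      simpa [hneighbor] using (H.mem_neighborFinset v a).2 ha
    refine ⟨Pi.single c 1, fun a b ha hb hab => ?_⟩
    rw [degreeTwo, if_pos hv]
    rcases hmem a ha with rfl | rfl <;> rcases hmem b hb with rfl | rfl <;> simp_all
  · exact ⟨0, fun a b _ _ _ => by simp [degreeTwo, hv]⟩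

theorem sum_map_degreeTwo_support_tail [DecidableEq W] [H.LocallyFinite] {x : W}
    {C : H.Walk x x} (hC : C.IsCycle) :
    (C.support.tail.map (degreeTwo H)).sum = #{w ∈ C.support.toFinset | H.degree w = 2} := by
  have htail : C.support.tail.toFinset = C.support.toFinset := by
    rw [← Walk.cons_tail_support C, List.tail_cons, List.toFinset_cons, insert_eq_of_mem]
    exact List.mem_toFinset.2 (Walk.end_mem_tail_support hC.not_nil)
  rw [← List.sum_toFinset _ hC.support_nodup, htail]
  exact sum_boole _ _

end HalfEdges

section OddColoring

variable {G : SimpleGraph V} [DecidableRel G.Adj] {k l : ℕ} {f : Sym2 V → Fin k} {v : V}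

theorem colorCount_eq_card_filter_neighborFinset (i : Fin k) :
    colorCount G f v i = #{u ∈ G.neighborFinset v | f s(v, u) = i} := by
  have himage : G.incidenceFinset v = (G.neighborFinset v).image fun u => s(v, u) := by
    ext e
    induction e with | _ a b
    simp only [mem_incidenceFinset, mk'_mem_incidenceSet_iff, mem_image, mem_neighborFinset]
    grind [G.adj_comm]
  rw [colorCount, himage, filter_image]
  exact card_image_of_injective _ fun _ _ => Sym2.congr_right.1

theorem colorCount_ne_zero_iff {i : Fin k} :
    colorCount G f v i ≠ 0 ↔ ∃ u, G.Adj v u ∧ f s(v, u) = i := by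
  simp only [colorCount_eq_card_filter_neighborFinset, card_ne_zero, Finset.Nonempty, mem_filter,
    mem_neighborFinset]

theorem sum_colorCount : ∑ i, colorCount G f v i = G.degree v := by
  rw [← G.card_incidenceFinset_eq_degree]
  exact (card_eq_sum_card_fiberwise fun _ _ => mem_univ _).symm

theorem colorCount_comp_of_injective {g : Fin k → Fin l} (hg : g.Injective) (i : Fin k) :
    colorCount G (g ∘ f) v (g i) = colorCount G f v i := by
  simp only [colorCount, Function.comp_apply, hg.eq_iff]

theorem colorCount_comp_of_notMem_range {g : Fin k → Fin l} {i : Fin l} (hi : i ∉ Set.range g) :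
    colorCount G (g ∘ f) v i = 0 := by
  rw [colorCount, card_eq_zero, filter_eq_empty_iff]
  exact fun e _ he => hi ⟨f e, he⟩

theorem IsOddColoring.comp_injective (hf : IsOddColoring G f) {g : Fin k → Fin l}
    (hg : g.Injective) : IsOddColoring G (g ∘ f) := by
  intro v i
  by_cases hi : i ∈ Set.range g
  · obtain ⟨j, rfl⟩ := hi
    rw [colorCount_comp_of_injective hg]
    exact hf v j
  · exact Or.inl (colorCount_comp_of_notMem_range hi)

theorem oddAt_of_injOn (hf : Set.InjOn (fun u => f s(v, u)) (G.neighborSet v)) :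
    OddAt G f v := by
  intro i
  have hle : colorCount G f v i ≤ 1 := by
    rw [colorCount_eq_card_filter_neighborFinset, card_le_one]
    simp only [mem_filter, mem_neighborFinset]
    exact fun a ha b hb => hf ha.1 hb.1 (ha.2.trans hb.2.symm)
  rcases Nat.le_one_iff_eq_zero_or_eq_one.1 hle with h | h <;> simp [h]

theorem oddAt_iff_injOn_of_degree_eq_two (hv : G.degree v = 2) :
    OddAt G f v ↔ Set.InjOn (fun u => f s(v, u)) (G.neighborSet v) := by
  refine ⟨fun hodd a ha b hb hab => ?_, oddAt_of_injOn⟩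
  by_contra hne
  have hgt : 1 < colorCount G f v (f s(v, a)) := by
    rw [colorCount_eq_card_filter_neighborFinset, one_lt_card]
    exact ⟨a, by simpa using ha, b, by simpa using ⟨hb, hab.symm⟩, hne⟩
  have hle : colorCount G f v (f s(v, a)) ≤ 2 := by
    rw [← hv, ← sum_colorCount (f := f)]
    exact single_le_sum (fun _ _ => Nat.zero_le _) (mem_univ _)
  grind [hodd (f s(v, a))]

theorem colorCount_add_colorCount_eq_degree {f : Sym2 V → Fin 2} {i j : Fin 2} (hij : i ≠ j) :
    colorCount G f v i + colorCount G f v j = G.degree v := by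
  have huniv : ∀ i j : Fin 2, i ≠ j → univ = {i, j} := by decide
  rw [← sum_colorCount (f := f), huniv i j hij, sum_pair hij]

theorem oddAt_iff_eq_of_odd_degree {f : Sym2 V → Fin 2} (hv : Odd (G.degree v)) :
    OddAt G f v ↔ ∀ a b, G.Adj v a → G.Adj v b → f s(v, a) = f s(v, b) := by
  refine ⟨fun hodd a b ha hb => ?_, fun hmono i => or_iff_not_imp_left.2 fun hi => ?_⟩
  · by_contra hne
    have hodd' (u : V) (hu : G.Adj v u) : Odd (colorCount G f v (f s(v, u))) :=
      (hodd _).resolve_left (colorCount_ne_zero_iff.2 ⟨u, hu, rfl⟩)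
    have heven := (hodd' a ha).add_odd (hodd' b hb)
    rw [colorCount_add_colorCount_eq_degree hne] at heven
    exact Nat.not_even_iff_odd.2 hv heven
  · obtain ⟨a, ha, rfl⟩ := colorCount_ne_zero_iff.1 hi
    have hall : colorCount G f v (f s(v, a)) = G.degree v := by
      rw [colorCount_eq_card_filter_neighborFinset, filter_true_of_mem,
        card_neighborFinset_eq_degree]
      exact fun u hu => hmono u a ((G.mem_neighborFinset v u).1 hu) ha
    rwa [hall]

variable (G) in
theorem exists_isOddColoring :
    ∃ (k : ℕ) (f : Sym2 V → Fin k), IsOddColoring G f :=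
  ⟨_, Fintype.equivFin _, fun _ => oddAt_of_injOn fun _ _ _ _ h =>
    Sym2.congr_right.1 ((Fintype.equivFin _).injective h)⟩

theorem oddChromIndex_le_iff :
    oddChromIndex G ≤ k ↔ ∃ f : Sym2 V → Fin k, IsOddColoring G f := by
  refine ⟨fun hle => ?_, fun h => Nat.sInf_le h⟩
  obtain ⟨f, hf⟩ : ∃ f : Sym2 V → Fin (oddChromIndex G), IsOddColoring G f :=
    Nat.sInf_mem (exists_isOddColoring G)
  exact ⟨_, hf.comp_injective (Fin.castLE_injective hle)⟩

theorem oddAt_iff_forall_add_eq_degreeTwo (hv : Odd (G.degree v) ∨ G.degree v = 2)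
    (f : Sym2 V → ZMod 2) :
    OddAt (k := 2) G f v ↔
      ∀ ⦃a b⦄, G.Adj v a → G.Adj v b → a ≠ b → f s(v, a) + f s(v, b) = degreeTwo G v := by
  have add_eq_one : ∀ x y : ZMod 2, x + y = 1 ↔ x ≠ y := by decide
  rcases hv with hv | hv
  · have hne : G.degree v ≠ 2 := fun h => by simp [h, Nat.odd_iff] at hv
    simp only [degreeTwo, if_neg hne, CharTwo.add_eq_zero]
    refine (oddAt_iff_eq_of_odd_degree hv).trans
      ⟨fun h a b ha hb _ => h a b ha hb, fun h a b ha hb => ?_⟩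
    rcases eq_or_ne a b with rfl | hab
    exacts [rfl, h ha hb hab]
  · simp only [degreeTwo, if_pos hv, add_eq_one]
    exact (oddAt_iff_injOn_of_degree_eq_two hv).trans
      ⟨fun h _ _ ha hb hab => h.ne ha hb hab, fun h _ ha _ hb => not_imp_not.1 (h ha hb)⟩

-- `ZMod 2` is `Fin 2` by definition, so a `ZMod 2`-labeling of the edges is a 2-edge-coloring.
theorem isOddColoring_iff_isHalfEdgeLabeling (hsub : ∀ v, Odd (G.degree v) ∨ G.degree v = 2)
    (f : Sym2 V → ZMod 2) :
    IsOddColoring (k := 2) G f ↔ IsHalfEdgeLabeling G (fun v u => f s(v, u)) (degreeTwo G) :=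
  forall_congr' fun v => oddAt_iff_forall_add_eq_degreeTwo (hsub v) f

end OddColoring

theorem subdivision_odd_two_colorable_iff (G : SimpleGraph V) [DecidableRel G.Adj]
    (hsub : ∀ v : V, Odd (G.degree v) ∨ G.degree v = 2) :
    oddChromIndex G ≤ 2 ↔
      ∀ (x : V) (C : G.Walk x x), C.IsCycle →
        Even ((C.support.toFinset.filter (fun w => G.degree w = 2)).card) := by
  obtain ⟨s, hs⟩ := exists_isHalfEdgeLabeling_degreeTwo G
  calc oddChromIndex G ≤ 2
      ↔ ∃ f : Sym2 V → Fin 2, IsOddColoring G f := oddChromIndex_le_iff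
    _ ↔ ∃ f : Sym2 V → ZMod 2, IsHalfEdgeLabeling G (fun v u => f s(v, u)) (degreeTwo G) :=
        exists_congr (isOddColoring_iff_isHalfEdgeLabeling hsub)
    _ ↔ ∀ (x : V) (C : G.Walk x x), C.IsCycle → (C.support.tail.map (degreeTwo G)).sum = 0 :=
        hs.exists_edgeLabeling_iff
    _ ↔ _ := forall₃_congr fun x C hC => by
        rw [sum_map_degreeTwo_support_tail hC, ZMod.natCast_eq_zero_iff_even]
end
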